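/- Let Σ = {1,…,σ} with σ ≥ 2 even, and let A_k be as defined. A word v over Σ of length k+1 is a shortest absent subsequence of A_k if and only if v[2ℓ−1] ≥ v[2ℓ] for all ℓ ∈ [1 : ⌈k/2⌉] and v[2ℓ] ≤ v[2ℓ+1] for all ℓ ∈ [1 : ⌊k/2⌋] (i.e., the SAS of A_k are exactly the alternatingly non-increasing/non-decreasing sequences of length k+1). -/

import Mathlib

/-!
Cut a word into consecutive factors, one per block of `A_k`. Since every block contains all
letters, every word of length at most `k` embeds into `A_k` (`sublist_altBlocks`), so a word of
length `k + 1` is an SAS as soon as it is absent.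

For a word `a b t` of length `k + 1`, consider the first block `W`. If `ab` embeds into `W`, then
`t`, of length `k - 1`, embeds into the remaining `k - 1` blocks, and the word is present. Otherwise
`W` absorbs at most the letter `a`, so the word is present iff `b t` embeds into the remaining
blocks. By induction, the word is absent iff no two consecutive letters `v[i] v[i+1]` embed into the
`i`-th block (`not_sublist_altBlocks_iff`). In an increasing block this says `v[i] ≥ v[i+1]`, in a
decreasing block `v[i] ≤ v[i+1]`.
-/

/-- The word `v₁ = 1·2···σ` over the alphabet `Σ = {1,…,σ} ⊆ ℕ`. -/
def ascWord (σ : ℕ) : List ℕ := (List.range σ).map (· + 1)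

/-- The word `v₂ = σ·(σ−1)···1`. -/
def descWord (σ : ℕ) : List ℕ := (ascWord σ).reverse

/-- The word `A_k`: `A_{2k−1} = (v₁v₂)^{k−1}v₁` and `A_{2k} = A_{2k−1}·v₂`,
i.e. `k` alternating blocks `v₁, v₂, v₁, …` starting with `v₁`. -/
def Aword (σ k : ℕ) : List ℕ :=
  ((List.range k).map fun i => if i % 2 = 0 then ascWord σ else descWord σ).flatten

/-- `v` is a shortest absent subsequence (SAS) of `w`: `v` is a word over `alph(w)`
which is not a subsequence of `w`, of minimal length with this property. -/
def IsSAS (w v : List ℕ) : Prop :=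
  (∀ a ∈ v, a ∈ w) ∧ ¬ v.Sublist w ∧
    ∀ u : List ℕ, (∀ a ∈ u, a ∈ w) → ¬ u.Sublist w → v.length ≤ u.length

/-- `k` alternating blocks `W, W', W, …`, starting with `W`. -/
def altBlocks (W W' : List ℕ) : ℕ → List ℕ
  | 0 => []
  | k + 1 => W ++ altBlocks W' W k

lemma flatten_eq_altBlocks (k : ℕ) : ∀ W W' : List ℕ,
    ((List.range k).map fun i => if i % 2 = 0 then W else W').flatten = altBlocks W W' k := by
  induction k with
  | zero => intros; rfl
  | succ k ih =>
    intro W W'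
    rw [List.range_succ_eq_map, List.map_cons, List.flatten_cons, altBlocks, ← ih W' W,
      List.map_map]
    congr 3
    funext i
    have h : (i + 1) % 2 = 0 ↔ ¬ i % 2 = 0 := by omega
    simp only [Function.comp, Nat.succ_eq_add_one, h, ite_not]

/-- Universality: each block absorbs one letter. -/
lemma sublist_altBlocks (k : ℕ) : ∀ (W W' u : List ℕ), (∀ a ∈ u, a ∈ W) → (∀ a ∈ u, a ∈ W') →
    u.length ≤ k → u.Sublist (altBlocks W W' k) := by
  induction k with
  | zero =>
    intro W W' u _ _ h
    simp [List.length_eq_zero_iff.mp (Nat.le_zero.mp h)]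
  | succ k ih =>
    intro W W' u h1 h2 h
    cases u with
    | nil => simp
    | cons a t =>
      simp only [List.forall_mem_cons, List.length_cons] at h1 h2 h
      exact (List.singleton_sublist.mpr h1.1).append (ih W' W t h2.2 h1.2 (by omega))

lemma not_sublist_altBlocks_iff (k : ℕ) : ∀ (W W' v : List ℕ), (∀ a ∈ v, a ∈ W) →
    (∀ a ∈ v, a ∈ W') → v.length = k + 1 →
    (¬ v.Sublist (altBlocks W W' k) ↔
      ∀ i < k, ¬ [v.getD i 0, v.getD (i + 1) 0].Sublist (if i % 2 = 0 then W else W')) := by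
  induction k with
  | zero =>
    intro W W' v _ _ h
    have : v ≠ [] := by rintro rfl; simp at h
    simpa [altBlocks] using this
  | succ k ih =>
    intro W W' v h1 h2 h
    obtain _ | ⟨a, _ | ⟨b, t⟩⟩ := v
    · simp at h
    · simp at h
    have ih' := ih W' W (b :: t) (fun x hx => h2 x (List.mem_cons_of_mem _ hx))
      (fun x hx => h1 x (List.mem_cons_of_mem _ hx)) (by simpa using h)
    have split : (∀ i < k + 1, ¬ [(a :: b :: t).getD i 0, (a :: b :: t).getD (i + 1) 0].Sublist
        (if i % 2 = 0 then W else W')) ↔ (¬ [a, b].Sublist W ∧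
        ∀ i < k, ¬ [(b :: t).getD i 0, (b :: t).getD (i + 1) 0].Sublist
          (if i % 2 = 0 then W' else W)) := by
      have par : ∀ i, (i + 1) % 2 = 0 ↔ ¬ i % 2 = 0 := by intro i; omega
      rw [Nat.forall_lt_succ_left]
      simp only [List.getD_cons_succ, List.getD_cons_zero, par, ite_not, Nat.zero_mod, if_true]
    rw [split, ← ih']
    by_cases hab : [a, b].Sublist W
    · simp only [hab, not_true_eq_false, false_and, iff_false, not_not]
      have ht : t.Sublist (altBlocks W' W k) := by
        apply sublist_altBlocks
        · intro x hx; exact h2 x (by simp [hx])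
        · intro x hx; exact h1 x (by simp [hx])
        · simp only [List.length_cons] at h; omega
      exact hab.append ht
    · simp only [hab, not_false_eq_true, true_and, not_iff_not]
      constructor
      · intro hs
        obtain ⟨l₁, l₂, hl, s₁, s₂⟩ := List.sublist_append_iff.mp hs
        obtain _ | ⟨x, _ | ⟨y, l⟩⟩ := l₁
        · simp only [List.nil_append] at hl
          subst hl
          exact (List.sublist_cons_self a _).trans s₂
        · simp only [List.cons_append, List.nil_append, List.cons.injEq] at hl
          rw [hl.2]
          exact s₂
        · simp only [List.cons_append, List.cons.injEq] at hl
          obtain ⟨rfl, rfl, -⟩ := hl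
          exact absurd (List.Sublist.trans (by simp) s₁) hab
      · intro hs
        exact (List.singleton_sublist.mpr (h1 a (by simp))).append hs

lemma mem_ascWord {σ a : ℕ} : a ∈ ascWord σ ↔ a ∈ Finset.Icc 1 σ := by
  simp only [ascWord, List.mem_map, List.mem_range, Finset.mem_Icc]
  constructor
  · rintro ⟨x, hx, rfl⟩; omega
  · intro h; exact ⟨a - 1, by omega, by omega⟩

lemma pairwise_ascWord (σ : ℕ) : (ascWord σ).Pairwise (· < ·) := by
  rw [ascWord, List.pairwise_map]
  exact List.pairwise_lt_range.imp (by intro a b h; omega)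

lemma pair_sublist_ascWord {σ a b : ℕ} (ha : a ∈ ascWord σ) (hb : b ∈ ascWord σ) :
    [a, b].Sublist (ascWord σ) ↔ a < b := by
  constructor
  · intro h
    simpa using (pairwise_ascWord σ).sublist h
  · intro h
    obtain ⟨l₁, l₂, hl⟩ := List.append_of_mem ha
    have hp := pairwise_ascWord σ
    rw [hl] at hb hp ⊢
    have hb2 : b ∈ l₂ := by
      rcases List.mem_append.mp hb with h1 | h1
      · have := (List.pairwise_append.mp hp).2.2 b h1 a (by simp)
        omega
      · rcases List.mem_cons.mp h1 with h2 | h2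
        · omega
        · exact h2
    exact ((List.singleton_sublist.mpr hb2).cons_cons a).trans (List.sublist_append_right _ _)

lemma pair_sublist_descWord {σ a b : ℕ} (ha : a ∈ ascWord σ) (hb : b ∈ ascWord σ) :
    [a, b].Sublist (descWord σ) ↔ b < a := by
  rw [← pair_sublist_ascWord hb ha, descWord, ← List.reverse_sublist]
  simp

lemma Aword_eq (σ k : ℕ) : Aword σ k = altBlocks (ascWord σ) (descWord σ) k :=
  flatten_eq_altBlocks k _ _

lemma mem_descWord {σ a : ℕ} : a ∈ descWord σ ↔ a ∈ ascWord σ := by simp [descWord]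

lemma mem_Aword {σ k a : ℕ} (hk : 1 ≤ k) : a ∈ Aword σ k ↔ a ∈ ascWord σ := by
  constructor
  · intro h
    simp only [Aword, List.mem_flatten, List.mem_map] at h
    obtain ⟨l, ⟨i, -, rfl⟩, h⟩ := h
    split_ifs at h
    · exact h
    · exact mem_descWord.mp h
  · intro h
    obtain ⟨k, rfl⟩ : ∃ j, k = j + 1 := ⟨k - 1, by omega⟩
    rw [Aword_eq, altBlocks]
    exact List.mem_append_left _ h

lemma isSAS_Aword_iff {σ k : ℕ} (hk : 1 ≤ k) {v : List ℕ} (hv : ∀ a ∈ v, a ∈ ascWord σ)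
    (hlen : v.length = k + 1) : IsSAS (Aword σ k) v ↔ ¬ v.Sublist (Aword σ k) := by
  refine ⟨fun h => h.2.1, fun h => ⟨fun a ha => (mem_Aword hk).mpr (hv a ha), h, ?_⟩⟩
  intro u hu hns
  by_contra hlt
  have hu' : ∀ a ∈ u, a ∈ ascWord σ := fun a ha => (mem_Aword hk).mp (hu a ha)
  refine hns ?_
  rw [Aword_eq]
  exact sublist_altBlocks k _ _ u hu' (fun a ha => mem_descWord.mpr (hu' a ha)) (by omega)

/-- A word `v` over `Σ = {1,…,σ}` (σ ≥ 2 even) of length `k+1` is an SAS of `A_k` iff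
(1-based) `v[2ℓ−1] ≥ v[2ℓ]` for all `ℓ ∈ [1 : ⌈k/2⌉]` and `v[2ℓ] ≤ v[2ℓ+1]` for all
`ℓ ∈ [1 : ⌊k/2⌋]`. -/
theorem sas_Aword_iff_alternating (σ k : ℕ) (hσ : 2 ≤ σ) (heven : Even σ) (hk : 1 ≤ k)
    (v : List ℕ) (hv : ∀ a ∈ v, a ∈ Finset.Icc 1 σ) (hlen : v.length = k + 1) :
    IsSAS (Aword σ k) v ↔
      (∀ ℓ ∈ Finset.Icc 1 ((k + 1) / 2), v.getD (2 * ℓ - 2) 0 ≥ v.getD (2 * ℓ - 1) 0) ∧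
        (∀ ℓ ∈ Finset.Icc 1 (k / 2), v.getD (2 * ℓ - 1) 0 ≤ v.getD (2 * ℓ) 0) := by
  have hv' : ∀ a ∈ v, a ∈ ascWord σ := fun a ha => mem_ascWord.mpr (hv a ha)
  have hg : ∀ i < k + 1, v.getD i 0 ∈ ascWord σ := by
    intro i hi
    rw [List.getD_eq_getElem _ _ (by omega)]
    exact hv' _ (List.getElem_mem _)
  rw [isSAS_Aword_iff hk hv' hlen, Aword_eq, not_sublist_altBlocks_iff k _ _ v hv'
    (fun a ha => mem_descWord.mpr (hv' a ha)) hlen]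
  simp only [Finset.mem_Icc]
  constructor
  · intro h
    constructor
    · intro l hl
      have h1 := h (2 * l - 2) (by omega)
      rw [if_pos (by omega), pair_sublist_ascWord (hg _ (by omega)) (hg _ (by omega)),
        show 2 * l - 2 + 1 = 2 * l - 1 by omega] at h1
      omega
    · intro l hl
      have h1 := h (2 * l - 1) (by omega)
      rw [if_neg (by omega), pair_sublist_descWord (hg _ (by omega)) (hg _ (by omega)),
        show 2 * l - 1 + 1 = 2 * l by omega] at h1
      omega
  · rintro ⟨h1, h2⟩ i hi
    split_ifs with hp
    · rw [pair_sublist_ascWord (hg _ (by omega)) (hg _ (by omega))]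
      have := h1 (i / 2 + 1) (by omega)
      rw [show 2 * (i / 2 + 1) - 2 = i by omega, show 2 * (i / 2 + 1) - 1 = i + 1 by omega] at this
      omega
    · rw [pair_sublist_descWord (hg _ (by omega)) (hg _ (by omega))]
      have := h2 (i / 2 + 1) (by omega)
      rw [show 2 * (i / 2 + 1) - 1 = i by omega, show 2 * (i / 2 + 1) = i + 1 by omega] at this
      omega
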